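/- For all named GS4 derivations P with conclusion ⊢Γ,A∧B, the branch-labeled axiom graphs of the conjunction inversions are exactly the restrictions: ⟨⟨inv_l(P, A∧B)⟩⟩ = ⟨⟨P⟩⟩↾_{Γ,A} and ⟨⟨inv_r(P, A∧B)⟩⟩ = ⟨⟨P⟩⟩↾_{Γ,B}. -/

import Mathlib

open scoped Classical

noncomputable section

namespace GS4

/-- Named classical propositional formulas over atoms `α`, with names in `ℕ`. -/
inductive NForm (α : Type) : Type
  | atom : ℕ → α → NForm α
  | or   : NForm α → NForm α → NForm α
  | and  : NForm α → NForm α → NForm α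

variable {α : Type}

/-- Name-preserving De Morgan negation, w.r.t. an involution `bar` on atoms. -/
def negF (bar : α → α) : NForm α → NForm α
  | .atom x a => .atom x (bar a)
  | .or A B => .and (negF bar A) (negF bar B)
  | .and A B => .or (negF bar A) (negF bar B)

/-- The set of names occurring in a named formula. -/
def NForm.names : NForm α → Set ℕ
  | .atom x _ => {x}
  | .or A B => A.names ∪ B.names
  | .and A B => A.names ∪ B.names

/-- A named formula is sharing-free if every name occurs at most once in it. -/
def NForm.sharingFree : NForm α → Prop
  | .atom _ _ => True
  | .or A B => A.sharingFree ∧ B.sharingFree ∧ Disjoint A.names B.names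
  | .and A B => A.sharingFree ∧ B.sharingFree ∧ Disjoint A.names B.names

def NForm.isAtom : NForm α → Prop
  | .atom _ _ => True
  | _ => False

/-- Anonymous formulas (shapes): `A ≡ B` iff their shapes coincide. -/
inductive Shape (α : Type) : Type
  | atom : α → Shape α
  | or   : Shape α → Shape α → Shape α
  | and  : Shape α → Shape α → Shape α

def NForm.shape : NForm α → Shape α
  | .atom _ a => .atom a
  | .or A B => .or A.shape B.shape
  | .and A B => .and A.shape B.shape

/-- `HasAtom A x a`: the atomic formula `x:a` occurs in `A`. -/
def HasAtom : NForm α → ℕ → α → Prop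
  | .atom y b, x, a => y = x ∧ b = a
  | .or A B, x, a => HasAtom A x a ∨ HasAtom B x a
  | .and A B, x, a => HasAtom A x a ∨ HasAtom B x a

/-- Names of a finite set of named formulas. -/
def snames (Γ : Finset (NForm α)) : Set ℕ := ⋃ A ∈ Γ, A.names

/-- A finite set of named formulas is sharing-free if all its elements are
sharing-free with pairwise disjoint name sets. -/
def SFSet (Γ : Finset (NForm α)) : Prop :=
  (∀ A ∈ Γ, A.sharingFree) ∧
  ∀ A ∈ Γ, ∀ B ∈ Γ, A ≠ B → Disjoint A.names B.names

/-- `x:a` occurs in some formula of `Γ` (i.e. `Γ[x] = a` for sharing-free `Γ`). -/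
def HasAtomS (Γ : Finset (NForm α)) (x : ℕ) (a : α) : Prop :=
  ∃ A ∈ Γ, HasAtom A x a

/-- Branch sets of named formulas. -/
def BrF : NForm α → Set (Set ℕ)
  | .atom x _ => {{x}}
  | .or A B => {X | ∃ Y ∈ BrF A, ∃ Z ∈ BrF B, X = Y ∪ Z}
  | .and A B => BrF A ∪ BrF B

/-- Branch sets of sequents (finite sharing-free sets of named formulas). -/
def BrS (Γ : Finset (NForm α)) : Set (Set ℕ) :=
  {X | X ⊆ snames Γ ∧ ∀ A ∈ Γ, X ∩ A.names ∈ BrF A}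

/-! ## Branch-labeled name graphs -/

/-- A branch-labeled name graph: vertices and a relation between unordered
pairs of vertices and branch labels. -/
structure BLGraph : Type where
  verts : Set ℕ
  rel : Sym2 ℕ → Set ℕ → Prop

/-- Well-formedness of a bl-graph: related pairs consist of distinct vertices,
labels are sets of vertices, and each edge is included in its labels. -/
def BLGraph.IsBL (G : BLGraph) : Prop :=
  ∀ e X, G.rel e X → ¬ e.IsDiag ∧ X ⊆ G.verts ∧ ∀ v ∈ e, v ∈ X

def BLGraph.Edges (G : BLGraph) : Set (Sym2 ℕ) := {e | ∃ X, G.rel e X}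

def BLGraph.Br (G : BLGraph) : Set (Set ℕ) := {X | ∃ e, G.rel e X}

def BLGraph.union (G H : BLGraph) : BLGraph :=
  ⟨G.verts ∪ H.verts, fun e X => G.rel e X ∨ H.rel e X⟩

/-- Restriction `G↾_S` of a bl-graph. -/
def BLGraph.restrict (G : BLGraph) (S : Set ℕ) : BLGraph :=
  ⟨G.verts ∩ S, fun e X => G.rel e X ∧ X ⊆ S⟩

/-- The interface-relativized edge-branch relation `e ⊰^I_G X`. -/
def BLGraph.relI (G : BLGraph) (I : Set ℕ) (e : Sym2 ℕ) (X : Set ℕ) : Prop :=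
  ∃ Y, G.rel e Y ∧ X = Y \ I

/-- `z 0, …, z (n-1)` is an `X`-labeled alternating path between `G` and `H`
through the interface `I`. -/
def AltPath (G H : BLGraph) (I X : Set ℕ) (n : ℕ) (z : ℕ → ℕ) : Prop :=
  1 < n ∧
  (∀ i < n, ∀ j < n, z i = z j → i = j) ∧
  (∀ i, 0 < i → i + 1 < n → z i ∈ I) ∧
  ((∀ i, i + 1 < n →
      (Even i → G.relI I s(z i, z (i + 1)) X) ∧ (¬ Even i → H.relI I s(z i, z (i + 1)) X)) ∨
   (∀ i, i + 1 < n →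
      (Even i → H.relI I s(z i, z (i + 1)) X) ∧ (¬ Even i → G.relI I s(z i, z (i + 1)) X)))

/-- Composition of bl-graphs over an interface `I`. -/
def BLGraph.comp (G H : BLGraph) (I : Set ℕ) : BLGraph :=
  ⟨(G.verts ∪ H.verts) \ I,
   fun e X => ∃ n z, AltPath G H I X n z ∧ z 0 ∉ I ∧ z (n - 1) ∉ I ∧
     e = s(z 0, z (n - 1))⟩

/-- The weakening operator on bl-graphs: add vertices `V` and extend every
branch label by a member of `Brs`. -/
def blwk (V : Set ℕ) (Brs : Set (Set ℕ)) (G : BLGraph) : BLGraph :=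
  ⟨G.verts ∪ V, fun e X => ∃ Y Z, G.rel e Y ∧ Z ∈ Brs ∧ X = Y ∪ Z⟩

/-- The bl-identity graph `id_{A,C}` on a pair of dual formulas. -/
def blid : NForm α → NForm α → BLGraph
  | .atom x _, .atom y _ => ⟨{x, y}, fun e X => e = s(x, y) ∧ X = {x, y}⟩
  | .or A1 A2, .and C1 C2 =>
      (blwk A2.names (BrF A2) (blid A1 C1)).union (blwk A1.names (BrF A1) (blid A2 C2))
  | .and A1 A2, .or C1 C2 =>
      (blwk C2.names (BrF C2) (blid A1 C1)).union (blwk C1.names (BrF C1) (blid A2 C2))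
  | _, _ => ⟨∅, fun _ _ => False⟩

/-! ## Simple name graphs -/

/-- A simple name graph. -/
structure NGraph : Type where
  verts : Set ℕ
  edges : Set (Sym2 ℕ)

/-- Subgraph relation `H ⊑ G`. -/
def NGraph.Sub (H G : NGraph) : Prop := H.verts ⊆ G.verts ∧ H.edges ⊆ G.edges

def NGraph.union (G H : NGraph) : NGraph := ⟨G.verts ∪ H.verts, G.edges ∪ H.edges⟩

/-- Induced subgraph `G↾_S`. -/
def NGraph.restrict (G : NGraph) (S : Set ℕ) : NGraph :=
  ⟨G.verts ∩ S, {e ∈ G.edges | ∀ v ∈ e, v ∈ S}⟩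

/-- Alternating paths between simple name graphs through an interface. -/
def NAltPath (G H : NGraph) (I : Set ℕ) (n : ℕ) (z : ℕ → ℕ) : Prop :=
  0 < n ∧
  (∀ i < n, ∀ j < n, z i = z j → i = j) ∧
  (∀ i, 0 < i → i + 1 < n → z i ∈ I) ∧
  ((∀ i, i + 1 < n →
      (Even i → s(z i, z (i + 1)) ∈ G.edges) ∧ (¬ Even i → s(z i, z (i + 1)) ∈ H.edges)) ∨
   (∀ i, i + 1 < n →
      (Even i → s(z i, z (i + 1)) ∈ H.edges) ∧ (¬ Even i → s(z i, z (i + 1)) ∈ G.edges)))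

/-- Composition of simple name graphs over an interface. -/
def NGraph.comp (G H : NGraph) (I : Set ℕ) : NGraph :=
  ⟨(G.verts ∪ H.verts) \ I,
   {e | ∃ x y, x ≠ y ∧ x ∈ (G.verts ∪ H.verts) \ I ∧ y ∈ (G.verts ∪ H.verts) \ I ∧
        e = s(x, y) ∧ ∃ n z, NAltPath G H I n z ∧ z 0 = x ∧ z (n - 1) = y}⟩

/-- The identity graph `Id_{A,C}` on a pair of dual formulas. -/
def idg : NForm α → NForm α → NGraph
  | .atom x _, .atom y _ => ⟨{x, y}, {s(x, y)}⟩
  | .or A1 A2, .and C1 C2 => (idg A1 C1).union (idg A2 C2)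
  | .and A1 A2, .or C1 C2 => (idg A1 C1).union (idg A2 C2)
  | _, _ => ⟨∅, ∅⟩

/-- The edgeless (weakening) graph on the names of `Γ`. -/
def wkg (Γ : Finset (NForm α)) : NGraph := ⟨snames Γ, ∅⟩

/-! ## Named GS4 derivations -/

/-- Named GS4 derivation trees. -/
inductive Deriv (α : Type) : Type
  | ax (Γ : Finset (NForm α)) (A C : NForm α)
  | cut (A : NForm α) (P Q : Deriv α)
  | sup (P Q : Deriv α)
  | orI (A B : NForm α) (P : Deriv α)
  | andI (A B : NForm α) (P Q : Deriv α)

/-- Conclusion of a derivation tree. -/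
def concl : Deriv α → Finset (NForm α)
  | .ax Γ A C => insert A (insert C Γ)
  | .cut A P _ => (concl P).erase A
  | .sup P _ => concl P
  | .orI A B P => insert (NForm.or A B) (((concl P).erase A).erase B)
  | .andI A B P _ => insert (NForm.and A B) ((concl P).erase A)

/-- Well-formedness of derivation trees w.r.t. the atom involution `bar`:
each rule is applied correctly to sharing-free named sequents. -/
def WF (bar : α → α) : Deriv α → Prop
  | .ax Γ A C =>
      A.shape = (negF bar C).shape ∧
      A.sharingFree ∧ C.sharingFree ∧ SFSet Γ ∧
      Disjoint A.names C.names ∧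
      Disjoint A.names (snames Γ) ∧ Disjoint C.names (snames Γ)
  | .cut A P Q =>
      WF bar P ∧ WF bar Q ∧
      ∃ Γ : Finset (NForm α), A ∉ Γ ∧ negF bar A ∉ Γ ∧
        concl P = insert A Γ ∧ concl Q = insert (negF bar A) Γ ∧
        A.sharingFree ∧ SFSet Γ ∧ Disjoint A.names (snames Γ)
  | .sup P Q => WF bar P ∧ WF bar Q ∧ concl P = concl Q
  | .orI A B P =>
      WF bar P ∧
      ∃ Γ : Finset (NForm α), A ∉ Γ ∧ B ∉ Γ ∧ A ≠ B ∧
        concl P = insert A (insert B Γ) ∧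
        A.sharingFree ∧ B.sharingFree ∧ SFSet Γ ∧
        Disjoint A.names B.names ∧
        Disjoint A.names (snames Γ) ∧ Disjoint B.names (snames Γ)
  | .andI A B P Q =>
      WF bar P ∧ WF bar Q ∧
      ∃ Γ : Finset (NForm α), A ∉ Γ ∧ B ∉ Γ ∧
        concl P = insert A Γ ∧ concl Q = insert B Γ ∧
        A.sharingFree ∧ B.sharingFree ∧ SFSet Γ ∧
        Disjoint A.names B.names ∧
        Disjoint A.names (snames Γ) ∧ Disjoint B.names (snames Γ)

/-- A derivation is cut-free if it contains no cut rule. -/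
def CutFree : Deriv α → Prop
  | .ax _ _ _ => True
  | .cut _ _ _ => False
  | .sup P Q => CutFree P ∧ CutFree Q
  | .orI _ _ P => CutFree P
  | .andI _ _ P Q => CutFree P ∧ CutFree Q

/-- The branch-labeled axiom graph `⟨⟨P⟩⟩` of a derivation. -/
def blaxg : Deriv α → BLGraph
  | .ax Γ A C => blwk (snames Γ) (BrS Γ) (blid A C)
  | .cut A P Q => BLGraph.comp (blaxg P) (blaxg Q) A.names
  | .sup P Q => (blaxg P).union (blaxg Q)
  | .orI _ _ P => blaxg P
  | .andI _ _ P Q => (blaxg P).union (blaxg Q)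

/-- The (simple) axiom graph `⟦P⟧` of a derivation. -/
def axg : Deriv α → NGraph
  | .ax Γ A C => (wkg Γ).union (idg A C)
  | .cut A P Q => NGraph.comp (axg P) (axg Q) A.names
  | .sup P Q => (axg P).union (axg Q)
  | .orI _ _ P => axg P
  | .andI _ _ P Q => (axg P).union (axg Q)

/-! ## Inversion and isolation -/

/-- Inversion of a disjunction `D ∨ E` in the conclusion. -/
def inv (D E : NForm α) : Deriv α → Deriv α
  | .ax Γ A C =>
      if A = NForm.or D E then
        match C with
        | .and C1 C2 =>
            .andI C1 C2 (.ax (insert E Γ) D C1) (.ax (insert D Γ) E C2)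
        | _ => .ax Γ A C
      else if C = NForm.or D E then
        match A with
        | .and A1 A2 =>
            .andI A1 A2 (.ax (insert E Γ) A1 D) (.ax (insert D Γ) A2 E)
        | _ => .ax Γ A C
      else
        .ax (insert D (insert E (Γ.erase (NForm.or D E)))) A C
  | .cut A P Q => .cut A (inv D E P) (inv D E Q)
  | .sup P Q => .sup (inv D E P) (inv D E Q)
  | .orI A B P => if A = D ∧ B = E then P else .orI A B (inv D E P)
  | .andI A B P Q => .andI A B (inv D E P) (inv D E Q)

/-- Left inversion of a conjunction `D ∧ E` in the conclusion. -/
def invl (D E : NForm α) : Deriv α → Deriv α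
  | .ax Γ A C =>
      if A = NForm.and D E then
        match C with
        | .or C1 C2 => .orI C1 C2 (.ax (insert C2 Γ) D C1)
        | _ => .ax Γ A C
      else if C = NForm.and D E then
        match A with
        | .or A1 A2 => .orI A1 A2 (.ax (insert A2 Γ) A1 D)
        | _ => .ax Γ A C
      else
        .ax (insert D (Γ.erase (NForm.and D E))) A C
  | .cut A P Q => .cut A (invl D E P) (invl D E Q)
  | .sup P Q => .sup (invl D E P) (invl D E Q)
  | .orI A B P => .orI A B (invl D E P)
  | .andI A B P Q => if A = D ∧ B = E then P else .andI A B (invl D E P) (invl D E Q)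

/-- Right inversion of a conjunction `D ∧ E` in the conclusion. -/
def invr (D E : NForm α) : Deriv α → Deriv α
  | .ax Γ A C =>
      if A = NForm.and D E then
        match C with
        | .or C1 C2 => .orI C1 C2 (.ax (insert C1 Γ) E C2)
        | _ => .ax Γ A C
      else if C = NForm.and D E then
        match A with
        | .or A1 A2 => .orI A1 A2 (.ax (insert A1 Γ) A2 E)
        | _ => .ax Γ A C
      else
        .ax (insert E (Γ.erase (NForm.and D E))) A C
  | .cut A P Q => .cut A (invr D E P) (invr D E Q)
  | .sup P Q => .sup (invr D E P) (invr D E Q)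
  | .orI A B P => .orI A B (invr D E P)
  | .andI A B P Q => if A = D ∧ B = E then Q else .andI A B (invr D E P) (invr D E Q)

/-- Isolation of a non-atomic formula in the conclusion. -/
def isl : NForm α → Deriv α → Deriv α
  | .or A B, P => .orI A B (inv A B P)
  | .and A B, P => .andI A B (invl A B P) (invr A B P)
  | .atom _ _, P => P

/-- Totality of a bl-graph w.r.t. a sharing-free named sequent. -/
def Total (bar : α → α) (G : BLGraph) (Γ : Finset (NForm α)) : Prop :=
  G.verts = snames Γ ∧
  G.Br = BrS Γ ∧
  ∀ x y : ℕ, s(x, y) ∈ G.Edges →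
    ∀ a b : α, HasAtomS Γ x a → HasAtomS Γ y b → a = bar b

end GS4

/-!
A union of two bl-graphs carried by `⊢ Δ, A` and by `⊢ Δ, B` determines its two parts: the branches
of `⊢ Δ, A` avoid the names of `B`, whereas every branch of `⊢ Δ, B` meets them, so deleting the
names of `B` leaves exactly the first graph. This settles the rule introducing `A ∧ B`. It also
settles the axioms, because an axiom whose conclusion contains `A ∧ B` has the same graph as the
`∧`-rule applied to its two inversions. All other rules commute with restriction; for a cut this
needs the restricting set to contain the interface, which is why the induction runs with the
complement of the names of the discarded conjunct instead of the names of `Γ, A`.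
-/

namespace GS4

open scoped SetFamily

variable {α : Type} {bar : α → α} {A B C D E : NForm α} {P Q : Deriv α} {Γ Δ : Finset (NForm α)}
  {G H : BLGraph} {e : Sym2 ℕ} {I S V W X : Set ℕ} {𝓑 𝓒 : Set (Set ℕ)}

/-! ### Names and branches -/

theorem names_negF (bar : α → α) (A : NForm α) : (negF bar A).names = A.names := by
  induction A <;> simp_all only [negF, NForm.names]

theorem snames_insert (A : NForm α) (Γ : Finset (NForm α)) :
    snames (insert A Γ) = A.names ∪ snames Γ :=
  Finset.set_biUnion_insert _ _ _

theorem names_subset_snames (hA : A ∈ Γ) : A.names ⊆ snames Γ :=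
  Set.subset_biUnion_of_mem (u := NForm.names) hA

theorem disjoint_snames_right : Disjoint V (snames Γ) ↔ ∀ A ∈ Γ, Disjoint V A.names :=
  Set.disjoint_iUnion₂_right

theorem disjoint_snames_insert_right :
    Disjoint V (snames (insert A Γ)) ↔ Disjoint V A.names ∧ Disjoint V (snames Γ) := by
  rw [snames_insert, Set.disjoint_union_right]

theorem SFSet.insert (hΓ : SFSet Γ) (hA : A.sharingFree) (hd : Disjoint A.names (snames Γ)) :
    SFSet (insert A Γ) := by
  refine ⟨Finset.forall_mem_insert _ _ _ |>.2 ⟨hA, hΓ.1⟩, ?_⟩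
  have hpd : (Γ : Set (NForm α)).PairwiseDisjoint NForm.names := fun B hB C hC => hΓ.2 B hB C hC
  have := hpd.insert fun B hB _ => disjoint_snames_right.1 hd B hB
  exact fun B hB C hC => this (by simpa using hB) (by simpa using hC)

theorem SFSet.disjoint_snames (h : SFSet (Insert.insert A Γ)) (hA : A ∉ Γ) :
    Disjoint A.names (snames Γ) :=
  disjoint_snames_right.2 fun B hB =>
    h.2 A (Finset.mem_insert_self _ _) B (Finset.mem_insert_of_mem hB) fun hAB => hA (hAB ▸ hB)

theorem BrF_or (A B : NForm α) : BrF (.or A B) = BrF A ⊻ BrF B := by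
  ext X
  simp only [BrF, Set.mem_ofPred_eq, Set.mem_sups, Set.sup_eq_union, eq_comm]

theorem subset_names_of_mem_BrF (hX : X ∈ BrF A) : X ⊆ A.names := by
  induction A generalizing X with
  | atom x a => exact subset_of_eq hX
  | or A B ihA ihB =>
    obtain ⟨Y, hY, Z, hZ, rfl⟩ := hX
    exact Set.union_subset_union (ihA hY) (ihB hZ)
  | and A B ihA ihB =>
    exact hX.elim (fun hX => (ihA hX).trans Set.subset_union_left)
      fun hX => (ihB hX).trans Set.subset_union_right

theorem nonempty_of_mem_BrF (hX : X ∈ BrF A) : X.Nonempty := by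
  induction A generalizing X with
  | atom x a => exact ⟨x, hX.symm.subset rfl⟩
  | or A B ihA _ =>
    obtain ⟨Y, hY, Z, -, rfl⟩ := hX
    exact (ihA hY).inl
  | and A B ihA ihB => exact hX.elim ihA ihB

theorem inter_names_nonempty_of_mem_BrS (hX : X ∈ BrS Γ) (hA : A ∈ Γ) : (X ∩ A.names).Nonempty :=
  nonempty_of_mem_BrF (hX.2 A hA)

theorem sdiff_names_mem_BrS (hd : Disjoint A.names (snames Γ)) (hX : X ∈ BrS (insert A Γ)) :
    X \ A.names ∈ BrS Γ := by
  refine ⟨Set.sdiff_subset_iff.2 (snames_insert A Γ ▸ hX.1), fun B hB => ?_⟩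
  have hAB := disjoint_snames_right.1 hd B hB
  rw [Set.inter_comm, ← Set.inter_sdiff_assoc, Set.inter_comm,
    (hAB.symm.mono_left Set.inter_subset_right).sdiff_eq_left]
  exact hX.2 B (Finset.mem_insert_of_mem hB)

theorem BrS_insert (hd : Disjoint A.names (snames Γ)) : BrS (insert A Γ) = BrF A ⊻ BrS Γ := by
  refine Set.Subset.antisymm (fun X hX => ?_) (Set.sups_subset_iff.2 fun Y hY Z hZ => ⟨?_, ?_⟩)
  · exact Set.mem_sups.2 ⟨X ∩ A.names, hX.2 A (Finset.mem_insert_self _ _), X \ A.names,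
      sdiff_names_mem_BrS hd hX, Set.inter_union_sdiff _ _⟩
  · rw [snames_insert]
    exact Set.union_subset_union (subset_names_of_mem_BrF hY) hZ.1
  · have hYA := subset_names_of_mem_BrF hY
    simp only [Set.sup_eq_union, Finset.forall_mem_insert]
    refine ⟨?_, fun B hB => ?_⟩
    · rwa [Set.union_inter_distrib_right, Set.inter_eq_left.2 hYA,
        (hd.symm.mono_left hZ.1).inter_eq, Set.union_empty]
    · rw [Set.union_inter_distrib_right, (hd.mono hYA (names_subset_snames hB)).inter_eq,
        Set.empty_union]
      exact hZ.2 B hB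

/-! ### Union, weakening, restriction and composition of bl-graphs -/

theorem BLGraph.ext (hv : G.verts = H.verts) (hr : ∀ e X, G.rel e X ↔ H.rel e X) : G = H := by
  obtain ⟨_, _⟩ := G
  obtain ⟨_, _⟩ := H
  exact BLGraph.mk.injEq .. ▸ ⟨hv, funext₂ fun e X => propext (hr e X)⟩

theorem BLGraph.union_comm (G H : BLGraph) : G.union H = H.union G :=
  BLGraph.ext (Set.union_comm _ _) fun _ _ => or_comm

theorem blwk_blwk (V W : Set ℕ) (𝓑 𝓒 : Set (Set ℕ)) (G : BLGraph) :
    blwk V 𝓑 (blwk W 𝓒 G) = blwk (W ∪ V) (𝓒 ⊻ 𝓑) G := by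
  refine BLGraph.ext (Set.union_assoc _ _ _) fun e X => ⟨?_, ?_⟩
  · rintro ⟨_, Z, ⟨Y, U, hY, hU, rfl⟩, hZ, rfl⟩
    exact ⟨Y, U ∪ Z, hY, Set.sup_mem_sups hU hZ, Set.union_assoc _ _ _⟩
  · rintro ⟨Y, _, hY, ⟨U, hU, Z, hZ, rfl⟩, rfl⟩
    exact ⟨Y ∪ U, Z, ⟨Y, U, hY, hU, rfl⟩, hZ, (Set.union_assoc _ _ _).symm⟩

theorem blwk_union (V : Set ℕ) (𝓑 : Set (Set ℕ)) (G H : BLGraph) :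
    blwk V 𝓑 (G.union H) = (blwk V 𝓑 G).union (blwk V 𝓑 H) := by
  refine BLGraph.ext (Set.union_union_distrib_right _ _ _) fun e X => ?_
  simp only [blwk, BLGraph.union, or_and_right, exists_or]

theorem blwk_union_branches (V W : Set ℕ) (𝓑 𝓒 : Set (Set ℕ)) (G : BLGraph) :
    blwk (V ∪ W) (𝓑 ∪ 𝓒) G = (blwk V 𝓑 G).union (blwk W 𝓒 G) := by
  refine BLGraph.ext (Set.union_union_distrib_left _ _ _) fun e X => ?_
  simp only [blwk, BLGraph.union, Set.mem_union, or_and_right, and_or_left, exists_or]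

theorem BLGraph.restrict_union (G H : BLGraph) (S : Set ℕ) :
    (G.union H).restrict S = (G.restrict S).union (H.restrict S) :=
  BLGraph.ext (Set.union_inter_distrib_right _ _ _) fun _ _ => or_and_right

theorem BLGraph.relI_restrict (hI : I ⊆ S) :
    (G.restrict S).relI I e X ↔ G.relI I e X ∧ X ⊆ S := by
  have hsub (Y : Set ℕ) : Y \ I ⊆ S ↔ Y ⊆ S := by
    rw [Set.sdiff_subset_iff, Set.union_eq_right.2 hI]
  constructor
  · rintro ⟨Y, ⟨hY, hYS⟩, rfl⟩
    exact ⟨⟨Y, hY, rfl⟩, (hsub Y).2 hYS⟩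
  · rintro ⟨⟨Y, hY, rfl⟩, hYS⟩
    exact ⟨Y, ⟨hY, (hsub Y).1 hYS⟩, rfl⟩

theorem AltPath.relI_first {n : ℕ} {z : ℕ → ℕ} (h : AltPath G H I X n z) :
    G.relI I s(z 0, z 1) X ∨ H.relI I s(z 0, z 1) X := by
  obtain ⟨hn, -, -, h⟩ := h
  exact h.imp (fun h => (h 0 hn).1 Even.zero) fun h => (h 0 hn).1 Even.zero

theorem altPath_restrict (hI : I ⊆ S) {n : ℕ} {z : ℕ → ℕ} :
    AltPath (G.restrict S) (H.restrict S) I X n z ↔ AltPath G H I X n z ∧ X ⊆ S := by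
  by_cases hX : X ⊆ S
  · simp only [AltPath, BLGraph.relI_restrict hI, hX, and_true]
  · refine iff_of_false (fun h => hX ?_) fun h => hX h.2
    exact h.relI_first.elim (fun h => ((BLGraph.relI_restrict hI).1 h).2)
      fun h => ((BLGraph.relI_restrict hI).1 h).2

theorem BLGraph.restrict_comp (G H : BLGraph) (hI : I ⊆ S) :
    (G.comp H I).restrict S = (G.restrict S).comp (H.restrict S) I := by
  refine BLGraph.ext ?_ fun e X => ?_
  · simp only [BLGraph.comp, BLGraph.restrict, ← Set.union_inter_distrib_right,
      Set.inter_sdiff_right_comm]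
  · change (∃ n z, _) ∧ _ ↔ ∃ n z, _
    simp only [altPath_restrict hI, ← exists_and_right]
    exact exists₂_congr fun n z => and_right_comm

/-! ### Bl-graphs carried by a set of branches -/

/-- `G` has vertex set `V` and all its labels belong to `𝓑`. With `V` and `𝓑` the names and the
branches of a sequent, this is the part of totality that inversion depends on. -/
def BLGraph.IsOn (G : BLGraph) (V : Set ℕ) (𝓑 : Set (Set ℕ)) : Prop :=
  G.verts = V ∧ G.Br ⊆ 𝓑

namespace BLGraph.IsOn

theorem label_mem (hG : G.IsOn V 𝓑) (hX : G.rel e X) : X ∈ 𝓑 :=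
  hG.2 ⟨e, hX⟩

theorem union (hG : G.IsOn V 𝓑) (hH : H.IsOn W 𝓒) : (G.union H).IsOn (V ∪ W) (𝓑 ∪ 𝓒) :=
  ⟨congrArg₂ (· ∪ ·) hG.1 hH.1, fun _ ⟨_, h⟩ => h.imp hG.label_mem hH.label_mem⟩

theorem blwk (hG : G.IsOn V 𝓑) : (blwk W 𝓒 G).IsOn (V ∪ W) (𝓑 ⊻ 𝓒) := by
  refine ⟨congrArg (· ∪ W) hG.1, ?_⟩
  rintro _ ⟨e, Y, Z, hY, hZ, rfl⟩
  exact Set.sup_mem_sups (hG.label_mem hY) hZ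

theorem comp {𝓓 : Set (Set ℕ)} (hG : G.IsOn (I ∪ V) 𝓑) (hH : H.IsOn (I ∪ V) 𝓒)
    (hd : Disjoint I V) (h𝓑 : ∀ X ∈ 𝓑, X \ I ∈ 𝓓) (h𝓒 : ∀ X ∈ 𝓒, X \ I ∈ 𝓓) :
    (G.comp H I).IsOn V 𝓓 := by
  constructor
  · rw [BLGraph.comp, hG.1, hH.1, Set.union_self, Set.union_sdiff_cancel_left hd.le_bot]
  · rintro X ⟨e, n, z, hz, -⟩
    rcases hz.relI_first with ⟨Y, hY, rfl⟩ | ⟨Y, hY, rfl⟩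
    exacts [h𝓑 Y (hG.label_mem hY), h𝓒 Y (hH.label_mem hY)]

theorem restrict_compl (hG : G.IsOn (V ∪ W) 𝓑) (h𝓑 : ∀ X ∈ 𝓑, X ⊆ V ∪ W) (hd : Disjoint V W) :
    G.restrict Wᶜ = G.restrict V := by
  have hVW : V ⊆ Wᶜ := hd.subset_compl_right
  have hsub : (V ∪ W) ∩ Wᶜ = V := by
    rw [← Set.sdiff_eq, Set.union_sdiff_cancel_right hd.le_bot]
  refine BLGraph.ext ?_ fun e X => and_congr_right fun hX => ⟨fun hXW => ?_, fun hXV => ?_⟩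
  · simp only [BLGraph.restrict, hG.1, hsub, Set.union_inter_cancel_left]
  · exact hsub ▸ Set.subset_inter (h𝓑 X (hG.label_mem hX)) hXW
  · exact hXV.trans hVW

theorem eq_restrict_union (hG : G.IsOn (snames (insert D Δ)) (BrS (insert D Δ)))
    (hH : H.IsOn (snames (insert E Δ)) (BrS (insert E Δ)))
    (hDE : Disjoint D.names E.names) (hE : Disjoint E.names (snames Δ)) :
    G = (G.union H).restrict E.namesᶜ := by
  have hD : snames (insert D Δ) ⊆ E.namesᶜ := by
    rw [snames_insert]
    exact Set.union_subset hDE.subset_compl_right hE.subset_compl_left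
  refine BLGraph.ext (Set.Subset.antisymm (fun x hx => ⟨Or.inl hx, ?_⟩) ?_) fun e X => ⟨?_, ?_⟩
  · exact hD (hG.1 ▸ hx)
  · rintro x ⟨hx | hx, hxE⟩
    · exact hx
    · rw [hH.1, snames_insert] at hx
      rw [hG.1, snames_insert]
      exact Or.inr (hx.resolve_left hxE)
  · exact fun hX => ⟨Or.inl hX, (hG.label_mem hX).1.trans hD⟩
  · rintro ⟨hX | hX, hXE⟩
    · exact hX
    · obtain ⟨x, hx, hxE⟩ :=
        inter_names_nonempty_of_mem_BrS (hH.label_mem hX) (Finset.mem_insert_self _ _)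
      exact absurd hxE (hXE hx)

theorem eq_restrict_union_both (hG : G.IsOn (snames (insert D Δ)) (BrS (insert D Δ)))
    (hH : H.IsOn (snames (insert E Δ)) (BrS (insert E Δ)))
    (hDE : Disjoint D.names E.names) (hD : Disjoint D.names (snames Δ))
    (hE : Disjoint E.names (snames Δ)) :
    G = (G.union H).restrict E.namesᶜ ∧ H = (G.union H).restrict D.namesᶜ :=
  ⟨hG.eq_restrict_union hH hDE hE, BLGraph.union_comm H G ▸ hH.eq_restrict_union hG hDE.symm hD⟩

end BLGraph.IsOn

/-! ### Axiom graphs are carried by the branches of the conclusion -/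

theorem isOn_blid (h : A.shape = (negF bar C).shape) :
    (blid A C).IsOn (A.names ∪ C.names) (BrF A ⊻ BrF C) := by
  fun_induction blid A C with
  | case1 x a y b =>
    refine ⟨rfl, ?_⟩
    rintro _ ⟨e, -, rfl⟩
    exact Set.sup_mem_sups rfl rfl
  | case2 A₁ A₂ C₁ C₂ ih₁ ih₂ =>
    simp only [NForm.shape, negF, Shape.or.injEq] at h
    convert ((ih₁ h.1).blwk (W := A₂.names) (𝓒 := BrF A₂)).union
      ((ih₂ h.2).blwk (W := A₁.names) (𝓒 := BrF A₁)) using 1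
    · ext
      simp only [NForm.names, Set.mem_union]
      tauto
    · rw [BrF_or, BrF, Set.sups_union_right, Set.sups_right_comm, Set.sups_comm (BrF A₁) (BrF A₂),
        Set.sups_right_comm (BrF A₂)]
  | case3 A₁ A₂ C₁ C₂ ih₁ ih₂ =>
    simp only [NForm.shape, negF, Shape.and.injEq] at h
    convert ((ih₁ h.1).blwk (W := C₂.names) (𝓒 := BrF C₂)).union
      ((ih₂ h.2).blwk (W := C₁.names) (𝓒 := BrF C₁)) using 1
    · ext
      simp only [NForm.names, Set.mem_union]
      tauto
    · rw [BrF_or, BrF, Set.sups_union_left, ← Set.sups_assoc, Set.sups_comm (BrF C₁) (BrF C₂),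
        ← Set.sups_assoc]
  | case4 A C h_atom h_or_and h_and_or =>
    cases A <;> cases C <;> simp only [NForm.shape, negF, reduceCtorEq] at h
    · exact (h_atom _ _ _ _ rfl rfl).elim
    · exact (h_or_and _ _ _ _ rfl rfl).elim
    · exact (h_and_or _ _ _ _ rfl rfl).elim

theorem isOn_blaxg_ax (h : A.shape = (negF bar C).shape) (hAC : Disjoint A.names C.names)
    (hA : Disjoint A.names (snames Γ)) (hC : Disjoint C.names (snames Γ)) :
    (blaxg (.ax Γ A C)).IsOn (snames (insert A (insert C Γ))) (BrS (insert A (insert C Γ))) := by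
  have hA' : Disjoint A.names (snames (insert C Γ)) := disjoint_snames_insert_right.2 ⟨hAC, hA⟩
  rw [snames_insert, snames_insert, BrS_insert hA', BrS_insert hC, ← Set.union_assoc,
    ← Set.sups_assoc]
  exact (isOn_blid h).blwk

theorem concl_cut (hA : A ∉ Γ) (hc : concl P = insert A Γ) : concl (.cut A P Q) = Γ := by
  rw [concl, hc, Finset.erase_insert hA]

theorem concl_orI (hA : A ∉ Γ) (hB : B ∉ Γ) (hAB : A ≠ B)
    (hc : concl P = insert A (insert B Γ)) : concl (.orI A B P) = insert (.or A B) Γ := by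
  rw [concl, hc, Finset.erase_insert (by simp [hA, hAB]), Finset.erase_insert hB]

theorem concl_andI (hA : A ∉ Γ) (hc : concl P = insert A Γ) :
    concl (.andI A B P Q) = insert (.and A B) Γ := by
  rw [concl, hc, Finset.erase_insert hA]

theorem sfSet_concl (hP : WF bar P) : SFSet (concl P) := by
  induction P with
  | ax Γ A C =>
    obtain ⟨-, hA, hC, hΓ, hAC, hAΓ, hCΓ⟩ := hP
    exact (hΓ.insert hC hCΓ).insert hA (disjoint_snames_insert_right.2 ⟨hAC, hAΓ⟩)
  | cut A P Q =>
    obtain ⟨-, -, Γ, hA, -, hc, -, -, hΓ, -⟩ := hP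
    rwa [concl_cut hA hc]
  | sup P Q ihP => exact ihP hP.1
  | orI A B P =>
    obtain ⟨-, Γ, hA, hB, hne, hc, hsA, hsB, hΓ, hAB, hAΓ, hBΓ⟩ := hP
    rw [concl_orI hA hB hne hc]
    exact hΓ.insert ⟨hsA, hsB, hAB⟩ (hAΓ.union_left hBΓ)
  | andI A B P Q =>
    obtain ⟨-, -, Γ, hA, -, hc, -, hsA, hsB, hΓ, hAB, hAΓ, hBΓ⟩ := hP
    rw [concl_andI hA hc]
    exact hΓ.insert ⟨hsA, hsB, hAB⟩ (hAΓ.union_left hBΓ)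

theorem snames_insert_or (A B : NForm α) (Γ : Finset (NForm α)) :
    snames (insert (.or A B) Γ) = snames (insert A (insert B Γ)) := by
  simp only [snames_insert, NForm.names, Set.union_assoc]

theorem snames_insert_and (A B : NForm α) (Γ : Finset (NForm α)) :
    snames (insert (.and A B) Γ) = snames (insert A Γ) ∪ snames (insert B Γ) := by
  rw [snames_insert, snames_insert, snames_insert, NForm.names, Set.union_union_distrib_right]

theorem BrS_insert_or (hAB : Disjoint A.names B.names) (hA : Disjoint A.names (snames Γ))
    (hB : Disjoint B.names (snames Γ)) :
    BrS (insert (.or A B) Γ) = BrS (insert A (insert B Γ)) := by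
  have hA' : Disjoint A.names (snames (insert B Γ)) := disjoint_snames_insert_right.2 ⟨hAB, hA⟩
  have hAB' : Disjoint (NForm.or A B).names (snames Γ) := hA.union_left hB
  rw [BrS_insert hAB', BrS_insert hA', BrS_insert hB, BrF_or, Set.sups_assoc]

theorem BrS_insert_and (hA : Disjoint A.names (snames Γ)) (hB : Disjoint B.names (snames Γ)) :
    BrS (insert (.and A B) Γ) = BrS (insert A Γ) ∪ BrS (insert B Γ) := by
  have hAB : Disjoint (NForm.and A B).names (snames Γ) := hA.union_left hB
  rw [BrS_insert hAB, BrS_insert hA, BrS_insert hB, BrF, Set.sups_union_left]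

theorem isOn_blaxg (hP : WF bar P) : (blaxg P).IsOn (snames (concl P)) (BrS (concl P)) := by
  induction P with
  | ax Γ A C =>
    obtain ⟨h, -, -, -, hAC, hA, hC⟩ := hP
    exact isOn_blaxg_ax h hAC hA hC
  | cut A P Q ihP ihQ =>
    obtain ⟨hP, hQ, Γ, hA, -, hcP, hcQ, -, -, hd⟩ := hP
    have hGP := hcP ▸ ihP hP
    have hGQ := hcQ ▸ ihQ hQ
    rw [snames_insert] at hGP hGQ
    rw [names_negF] at hGQ
    rw [concl_cut hA hcP]
    refine hGP.comp hGQ hd (fun X => sdiff_names_mem_BrS hd) fun X => ?_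
    rw [← names_negF bar] at hd ⊢
    exact sdiff_names_mem_BrS hd
  | sup P Q ihP ihQ =>
    obtain ⟨hP, hQ, hc⟩ := hP
    have h := (ihP hP).union (hc ▸ ihQ hQ)
    rwa [Set.union_self, Set.union_self] at h
  | orI A B P ih =>
    obtain ⟨hP, Γ, hA, hB, hne, hc, -, -, -, hAB, hAΓ, hBΓ⟩ := hP
    rw [concl_orI hA hB hne hc, snames_insert_or, BrS_insert_or hAB hAΓ hBΓ]
    exact hc ▸ ih hP
  | andI A B P Q ihP ihQ =>
    obtain ⟨hP, hQ, Γ, hA, -, hcP, hcQ, -, -, -, -, hAΓ, hBΓ⟩ := hP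
    rw [concl_andI hA hcP, snames_insert_and, BrS_insert_and hAΓ hBΓ]
    exact (hcP ▸ ihP hP).union (hcQ ▸ ihQ hQ)

/-! ### Inversion as restriction to the complement of the discarded conjunct -/

theorem blwk_blwk_BrF (hC : Disjoint C.names (snames Γ)) (G : BLGraph) :
    blwk (snames Γ) (BrS Γ) (blwk C.names (BrF C) G) =
      blwk (snames (insert C Γ)) (BrS (insert C Γ)) G := by
  rw [blwk_blwk, snames_insert, BrS_insert hC]

theorem blaxg_ax_and_or (hA : Disjoint A.names (snames Γ)) (hC : Disjoint C.names (snames Γ)) :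
    blaxg (.ax Γ (.and D E) (.or A C)) =
      (blaxg (.ax (insert C Γ) D A)).union (blaxg (.ax (insert A Γ) E C)) := by
  simp only [blaxg, blid, blwk_union, blwk_blwk_BrF hA, blwk_blwk_BrF hC]

theorem blaxg_ax_or_and (hA : Disjoint A.names (snames Γ)) (hC : Disjoint C.names (snames Γ)) :
    blaxg (.ax Γ (.or A C) (.and D E)) =
      (blaxg (.ax (insert C Γ) A D)).union (blaxg (.ax (insert A Γ) C E)) := by
  simp only [blaxg, blid, blwk_union, blwk_blwk_BrF hA, blwk_blwk_BrF hC]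

theorem blaxg_ax_insert_and (hD : Disjoint D.names (snames Γ)) (hE : Disjoint E.names (snames Γ)) :
    blaxg (.ax (insert (.and D E) Γ) A C) =
      (blaxg (.ax (insert D Γ) A C)).union (blaxg (.ax (insert E Γ) A C)) := by
  simp only [blaxg, snames_insert_and, BrS_insert_and hD hE, blwk_union_branches]

theorem blaxg_inv_ax_and_or (hP : WF bar (.ax Γ (.and D E) (.or A C))) :
    blaxg (invl D E (.ax Γ (.and D E) (.or A C))) =
        (blaxg (.ax Γ (.and D E) (.or A C))).restrict E.namesᶜ ∧
      blaxg (invr D E (.ax Γ (.and D E) (.or A C))) =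
        (blaxg (.ax Γ (.and D E) (.or A C))).restrict D.namesᶜ := by
  obtain ⟨hs, ⟨-, -, hDE⟩, ⟨-, -, hAC⟩, -, hd, hdDE, hdAC⟩ := hP
  simp only [NForm.shape, negF, Shape.and.injEq] at hs
  simp only [NForm.names, Set.disjoint_union_left, Set.disjoint_union_right] at hd hdDE hdAC
  obtain ⟨⟨hDA, hEA⟩, hDC, hEC⟩ := hd
  have hG := isOn_blaxg_ax hs.1 hDA (disjoint_snames_insert_right.2 ⟨hDC, hdDE.1⟩)
    (disjoint_snames_insert_right.2 ⟨hAC, hdAC.1⟩)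
  have hH := isOn_blaxg_ax hs.2 hEC (disjoint_snames_insert_right.2 ⟨hEA, hdDE.2⟩)
    (disjoint_snames_insert_right.2 ⟨hAC.symm, hdAC.2⟩)
  rw [Finset.insert_comm C A] at hH
  rw [blaxg_ax_and_or hdAC.1 hdAC.2]
  simp only [invl, invr, if_true]
  exact hG.eq_restrict_union_both hH hDE
    (disjoint_snames_insert_right.2 ⟨hDA, disjoint_snames_insert_right.2 ⟨hDC, hdDE.1⟩⟩)
    (disjoint_snames_insert_right.2 ⟨hEA, disjoint_snames_insert_right.2 ⟨hEC, hdDE.2⟩⟩)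

theorem blaxg_inv_ax_or_and (hP : WF bar (.ax Γ (.or A C) (.and D E))) :
    blaxg (invl D E (.ax Γ (.or A C) (.and D E))) =
        (blaxg (.ax Γ (.or A C) (.and D E))).restrict E.namesᶜ ∧
      blaxg (invr D E (.ax Γ (.or A C) (.and D E))) =
        (blaxg (.ax Γ (.or A C) (.and D E))).restrict D.namesᶜ := by
  obtain ⟨hs, ⟨-, -, hAC⟩, ⟨-, -, hDE⟩, -, hd, hdAC, hdDE⟩ := hP
  simp only [NForm.shape, negF, Shape.or.injEq] at hs
  simp only [NForm.names, Set.disjoint_union_left, Set.disjoint_union_right] at hd hdDE hdAC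
  obtain ⟨⟨hAD, hCD⟩, hAE, hCE⟩ := hd
  have hG := isOn_blaxg_ax hs.1 hAD (disjoint_snames_insert_right.2 ⟨hAC, hdAC.1⟩)
    (disjoint_snames_insert_right.2 ⟨hCD.symm, hdDE.1⟩)
  have hH := isOn_blaxg_ax hs.2 hCE (disjoint_snames_insert_right.2 ⟨hAC.symm, hdAC.2⟩)
    (disjoint_snames_insert_right.2 ⟨hAE.symm, hdDE.2⟩)
  rw [Finset.insert_comm A D] at hG
  rw [Finset.insert_comm C E, Finset.insert_comm C A] at hH
  rw [blaxg_ax_or_and hdAC.1 hdAC.2]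
  simp only [invl, invr, reduceCtorEq, if_true, if_false]
  exact hG.eq_restrict_union_both hH hDE
    (disjoint_snames_insert_right.2 ⟨hAD.symm, disjoint_snames_insert_right.2 ⟨hCD.symm, hdDE.1⟩⟩)
    (disjoint_snames_insert_right.2 ⟨hAE.symm, disjoint_snames_insert_right.2 ⟨hCE.symm, hdDE.2⟩⟩)

theorem blaxg_inv_ax_insert_and (hP : WF bar (.ax (insert (.and D E) Γ) A C))
    (hDE : .and D E ∉ Γ) (hA : A ≠ .and D E) (hC : C ≠ .and D E) :
    blaxg (invl D E (.ax (insert (.and D E) Γ) A C)) =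
        (blaxg (.ax (insert (.and D E) Γ) A C)).restrict E.namesᶜ ∧
      blaxg (invr D E (.ax (insert (.and D E) Γ) A C)) =
        (blaxg (.ax (insert (.and D E) Γ) A C)).restrict D.namesᶜ := by
  obtain ⟨hs, -, -, hΓ, hAC, hdA, hdC⟩ := hP
  have hdDE := hΓ.disjoint_snames hDE
  obtain ⟨-, -, hDE'⟩ := hΓ.1 _ (Finset.mem_insert_self _ _)
  simp only [disjoint_snames_insert_right, NForm.names, Set.disjoint_union_left,
    Set.disjoint_union_right] at hdA hdC hdDE
  obtain ⟨⟨hAD, hAE⟩, hdA⟩ := hdA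
  obtain ⟨⟨hCD, hCE⟩, hdC⟩ := hdC
  have hG := isOn_blaxg_ax hs hAC (disjoint_snames_insert_right.2 ⟨hAD, hdA⟩)
    (disjoint_snames_insert_right.2 ⟨hCD, hdC⟩)
  have hH := isOn_blaxg_ax hs hAC (disjoint_snames_insert_right.2 ⟨hAE, hdA⟩)
    (disjoint_snames_insert_right.2 ⟨hCE, hdC⟩)
  rw [Finset.insert_comm C D, Finset.insert_comm A D] at hG
  rw [Finset.insert_comm C E, Finset.insert_comm A E] at hH
  rw [blaxg_ax_insert_and hdDE.1 hdDE.2]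
  simp only [invl, invr, hA, hC, if_false, Finset.erase_insert hDE]
  exact hG.eq_restrict_union_both hH hDE'
    (disjoint_snames_insert_right.2 ⟨hAD.symm, disjoint_snames_insert_right.2 ⟨hCD.symm, hdDE.1⟩⟩)
    (disjoint_snames_insert_right.2 ⟨hAE.symm, disjoint_snames_insert_right.2 ⟨hCE.symm, hdDE.2⟩⟩)

theorem exists_eq_or_of_shape_and (h : (NForm.and D E).shape = (negF bar C).shape) :
    ∃ C₁ C₂, C = .or C₁ C₂ := by
  cases C <;> simp_all [NForm.shape, negF]

theorem exists_eq_or_of_shape_negF_and (h : A.shape = (negF bar (.and D E)).shape) :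
    ∃ A₁ A₂, A = .or A₁ A₂ := by
  cases A <;> simp_all [NForm.shape, negF]

theorem blaxg_inv_ax (hP : WF bar (.ax Γ A C)) (hDE : .and D E ∈ concl (.ax Γ A C)) :
    blaxg (invl D E (.ax Γ A C)) = (blaxg (.ax Γ A C)).restrict E.namesᶜ ∧
      blaxg (invr D E (.ax Γ A C)) = (blaxg (.ax Γ A C)).restrict D.namesᶜ := by
  by_cases hA : A = .and D E
  · subst hA
    obtain ⟨C₁, C₂, rfl⟩ := exists_eq_or_of_shape_and hP.1
    exact blaxg_inv_ax_and_or hP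
  by_cases hC : C = .and D E
  · subst hC
    obtain ⟨A₁, A₂, rfl⟩ := exists_eq_or_of_shape_negF_and hP.1
    exact blaxg_inv_ax_or_and hP
  have hΓ : .and D E ∈ Γ := by
    simpa only [concl, Finset.mem_insert, Ne.symm hA, Ne.symm hC, false_or] using hDE
  rw [← Finset.insert_erase hΓ] at hP ⊢
  exact blaxg_inv_ax_insert_and hP (Finset.notMem_erase _ _) hA hC

theorem blaxg_inv_andI (hP : WF bar (.andI D E P Q)) :
    blaxg (invl D E (.andI D E P Q)) = (blaxg (.andI D E P Q)).restrict E.namesᶜ ∧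
      blaxg (invr D E (.andI D E P Q)) = (blaxg (.andI D E P Q)).restrict D.namesᶜ := by
  obtain ⟨hP, hQ, Γ, -, -, hcP, hcQ, -, -, -, hDE, hD, hE⟩ := hP
  simp only [invl, invr, and_self, if_true]
  exact (hcP ▸ isOn_blaxg hP).eq_restrict_union_both (hcQ ▸ isOn_blaxg hQ) hDE hD hE

theorem blaxg_inv_and_compl (hP : WF bar P) (hDE : .and D E ∈ concl P) :
    blaxg (invl D E P) = (blaxg P).restrict E.namesᶜ ∧
      blaxg (invr D E P) = (blaxg P).restrict D.namesᶜ := by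
  induction P with
  | ax Γ A C => exact blaxg_inv_ax hP hDE
  | cut A P Q ihP ihQ =>
    obtain ⟨hP, hQ, Γ, hA, -, hcP, hcQ, -, -, hd⟩ := hP
    rw [concl_cut hA hcP] at hDE
    obtain ⟨ihPl, ihPr⟩ := ihP hP (hcP ▸ Finset.mem_insert_of_mem hDE)
    obtain ⟨ihQl, ihQr⟩ := ihQ hQ (hcQ ▸ Finset.mem_insert_of_mem hDE)
    obtain ⟨hAD, hAE⟩ := Set.disjoint_union_right.1 (disjoint_snames_right.1 hd _ hDE)
    rw [blaxg, BLGraph.restrict_comp _ _ hAE.subset_compl_right,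
      BLGraph.restrict_comp _ _ hAD.subset_compl_right, ← ihPl, ← ihPr, ← ihQl, ← ihQr]
    exact ⟨rfl, rfl⟩
  | sup P Q ihP ihQ =>
    obtain ⟨hP, hQ, hc⟩ := hP
    simp only [invl, invr, blaxg, BLGraph.restrict_union, ihP hP hDE, ihQ hQ (hc ▸ hDE), and_self]
  | orI A B P ih =>
    obtain ⟨hP, Γ, hA, hB, hne, hc, -⟩ := hP
    simp only [concl_orI hA hB hne hc, Finset.mem_insert, reduceCtorEq, false_or] at hDE
    exact ih hP (hc ▸ Finset.mem_insert_of_mem (Finset.mem_insert_of_mem hDE))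
  | andI A B P Q ihP ihQ =>
    by_cases h : A = D ∧ B = E
    · obtain ⟨rfl, rfl⟩ := h
      exact blaxg_inv_andI hP
    obtain ⟨hP, hQ, Γ, hA, -, hcP, hcQ, -⟩ := hP
    have hΓ : .and D E ∈ Γ := by
      rw [concl_andI hA hcP, Finset.mem_insert, NForm.and.injEq, eq_comm (a := D),
        eq_comm (a := E)] at hDE
      exact hDE.resolve_left h
    simp only [invl, invr, h, if_false, blaxg, BLGraph.restrict_union,
      ihP hP (hcP ▸ Finset.mem_insert_of_mem hΓ), ihQ hQ (hcQ ▸ Finset.mem_insert_of_mem hΓ),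
      and_self]

end GS4

/-- the branch-labeled axiom graphs of the conjunction
inversions are exactly the corresponding restrictions. -/
theorem GS4.blaxg_inv_and {α : Type} (bar : α → α)
    (hbar : Function.Involutive bar) (hfix : ∀ a, bar a ≠ a)
    (P : GS4.Deriv α) (hP : GS4.WF bar P)
    (Γ : Finset (GS4.NForm α)) (A B : GS4.NForm α)
    (hAB : GS4.NForm.and A B ∉ Γ)
    (hc : GS4.concl P = insert (GS4.NForm.and A B) Γ) :
    GS4.blaxg (GS4.invl A B P) = (GS4.blaxg P).restrict (GS4.snames Γ ∪ A.names) ∧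
    GS4.blaxg (GS4.invr A B P) = (GS4.blaxg P).restrict (GS4.snames Γ ∪ B.names) := by
  have hsf : GS4.SFSet (insert (.and A B) Γ) := hc ▸ GS4.sfSet_concl hP
  have hG : (GS4.blaxg P).IsOn _ _ := hc ▸ GS4.isOn_blaxg hP
  obtain ⟨-, -, hd⟩ := hsf.1 _ (Finset.mem_insert_self _ _)
  obtain ⟨hA, hB⟩ := Set.disjoint_union_left.1 (hsf.disjoint_snames hAB)
  have hl : GS4.snames (insert (.and A B) Γ) = GS4.snames Γ ∪ A.names ∪ B.names := by
    rw [GS4.snames_insert, Set.union_comm, GS4.NForm.names, Set.union_assoc]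
  have hr : GS4.snames (insert (.and A B) Γ) = GS4.snames Γ ∪ B.names ∪ A.names := by
    rw [hl, Set.union_right_comm]
  obtain ⟨hinvl, hinvr⟩ := GS4.blaxg_inv_and_compl hP (hc ▸ Finset.mem_insert_self _ _)
  rw [hinvl, hinvr]
  exact ⟨(hl ▸ hG).restrict_compl (fun X hX => hl ▸ hX.1) (hB.symm.union_left hd),
    (hr ▸ hG).restrict_compl (fun X hX => hr ▸ hX.1) (hA.symm.union_left hd.symm)⟩
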